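/- arXiv:2410.03267 — 2 statements merged into one kernel-verified Lean document; each statement's English description precedes it below -/
import Mathlib

section
/- Let X be a nonempty measurable space, P a probability measure on X, ε ∈ [0,1], and f : X → [0,∞] a measurable function. Then the infimum, over all probability measures Π in the ε-contaminated credal set 𝒫_ε(P), of the (Lebesgue) integral ∫ f dΠ equals (1−ε)·∫ f dP + ε·inf_{x ∈ X} f(x). -/
/-!
The integral against a mixture is the mixture of the integrals, so only the infimum of `∫ f dR`
over probability measures `R` matters. It is at least `inf f` since `R` has total mass one, and
the Dirac masses give every value `f x`. As `ε` is finite and `X` is nonempty, multiplying by `ε`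
and adding a constant both commute with the infimum over `x`, even if values are infinite.
-/

open MeasureTheory ENNReal

/-- The lower expectation of a nonnegative measurable function `f` over the
ε-contaminated credal set `{(1-ε) • P + ε • R : R probability}` equals
`(1-ε) * ∫ f dP + ε * inf f`. -/
theorem epsContamination_lower_expectation
    {X : Type*} [MeasurableSpace X] [Nonempty X]
    (P : Measure X) [IsProbabilityMeasure P]
    (ε : ℝ≥0∞) (hε : ε ≤ 1)
    (f : X → ℝ≥0∞) (hf : Measurable f) :
    ⨅ R : {R : Measure X // IsProbabilityMeasure R},
        ∫⁻ x, f x ∂((1 - ε) • P + ε • (R : Measure X)) =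
      (1 - ε) * ∫⁻ x, f x ∂P + ε * ⨅ x, f x := by
  have hne : ε ≠ ∞ := ne_top_of_le_ne_top one_ne_top hε
  simp only [lintegral_add_measure, lintegral_smul_measure, smul_eq_mul]
  apply le_antisymm
  · -- Contamination by the Dirac mass at `x` gives the term of index `x` on the right.
    rw [ENNReal.mul_iInf (fun h => absurd h hne), ENNReal.add_iInf]
    refine le_iInf fun x => ?_
    refine (iInf_le _ ⟨Measure.dirac x, inferInstance⟩).trans ?_
    simp only [lintegral_dirac' x hf, le_refl]
  · refine le_iInf fun R => ?_
    have := R.2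
    gcongr
    calc ⨅ x, f x = ∫⁻ _, (⨅ x, f x) ∂(R : Measure X) := by simp
      _ ≤ ∫⁻ x, f x ∂(R : Measure X) := lintegral_mono fun x => iInf_le f x
end

section
/- Let X and Y be measurable spaces, P a probability measure on X, Q a probability measure on Y, ε ∈ [0,1), and c : X × Y → [0,∞] a measurable cost function. Let T : X → Y be measurable and let π_T denote the pushforward of P under the map x ↦ (x, T(x)). Suppose (1−ε)·π_T belongs to Γ_R = {(1−ε)·G : G ∈ Γ(P,Q)} and minimizes ∫ c dα̲ over Γ_R. Then: (i) T_#((1−ε)·P) = (1−ε)·Q; (ii) T minimizes S ↦ ∫ c(x,S(x)) d((1−ε)·P)(x) over all measurable maps S : X → Y with S_#((1−ε)·P) = (1−ε)·Q; and (iii) the optimal value of the Lower Probability Monge problem equals the optimal value of the Restricted Lower Probability Kantorovich problem, i.e. inf over admissible maps S of ∫ c(x,S(x)) d((1−ε)·P)(x) equals inf over Γ_R of ∫ c dα̲. -/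
/-!
The idea: a measurable map `S` with `S_# ((1-ε) • P) = (1-ε) • Q` also satisfies `S_# P = Q`, because
`1 - ε` is a nonzero finite scalar and can be cancelled. Hence the graph plan `(1-ε) • π_S` lies in
`Γ_R` (`graphPlan_mem`), and its Kantorovich cost is the Monge cost of `S` (`lintegral_graphPlan`).
The Monge problem is therefore the Kantorovich problem restricted to graph plans, so a Kantorovich
minimizer that happens to be a graph plan solves both, with the same optimal value.
-/

open MeasureTheory ENNReal

/-- The set of couplings of `P` and `Q`: joint measures on `X × Y` whose marginals
are `P` and `Q`. -/
def Couplings {X Y : Type*} [MeasurableSpace X] [MeasurableSpace Y]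
    (P : Measure X) (Q : Measure Y) : Set (Measure (X × Y)) :=
  {α | α.map Prod.fst = P ∧ α.map Prod.snd = Q}

/-- Cancellation of a nonzero finite scalar acting on measures. -/
lemma measure_smul_cancel {Z : Type*} [MeasurableSpace Z] {a : ℝ≥0∞} (h0 : a ≠ 0) (ht : a ≠ ∞)
    {μ ν : Measure Z} (h : a • μ = a • ν) : μ = ν := by
  ext s _
  have hs : a * μ s = a * ν s := by
    simpa only [Measure.smul_apply, smul_eq_mul] using congrArg (fun m : Measure Z => m s) h
  exact (ENNReal.mul_right_inj h0 ht).mp hs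

lemma lintegral_graphPlan {X Y : Type*} [MeasurableSpace X] [MeasurableSpace Y]
    (P : Measure X) (a : ℝ≥0∞) {c : X × Y → ℝ≥0∞} (hc : Measurable c)
    {S : X → Y} (hS : Measurable S) :
    ∫⁻ z, c z ∂(a • Measure.map (fun x => (x, S x)) P) = ∫⁻ x, c (x, S x) ∂(a • P) := by
  rw [lintegral_smul_measure, lintegral_smul_measure, lintegral_map hc (by fun_prop)]

lemma graphPlan_mem {X Y : Type*} [MeasurableSpace X] [MeasurableSpace Y]
    {P : Measure X} {Q : Measure Y} {a : ℝ≥0∞} (h0 : a ≠ 0) (ht : a ≠ ∞)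
    {S : X → Y} (hS : Measurable S) (h : Measure.map S (a • P) = a • Q) :
    a • Measure.map (fun x => (x, S x)) P ∈
      (fun G : Measure (X × Y) => a • G) '' Couplings P Q := by
  refine ⟨_, ⟨?_, ?_⟩, rfl⟩
  · rw [Measure.map_map measurable_fst (by fun_prop)]
    exact Measure.map_id
  · rw [Measure.map_map measurable_snd (by fun_prop)]
    rw [Measure.map_smul] at h
    exact measure_smul_cancel h0 ht h

/-- Theorem 3 of the paper: if the plan `(1-ε) • π_T` induced by a measurable map `T`
(where `π_T` is the pushforward of `P` under `x ↦ (x, T x)`) belongs to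
`Γ_R = {(1-ε) • G : G ∈ Γ(P,Q)}` and minimizes the cost over `Γ_R`, then
(i) `T` pushes `(1-ε) • P` to `(1-ε) • Q`;
(ii) `T` minimizes the Lower Probability Monge cost among admissible maps; and
(iii) the optimal values of the Lower Probability Monge problem and the Restricted Lower
Probability Kantorovich problem coincide. -/
theorem rlpKantorovich_equiv_lpMonge
    {X Y : Type*} [MeasurableSpace X] [MeasurableSpace Y]
    (P : Measure X) [IsProbabilityMeasure P] (Q : Measure Y) [IsProbabilityMeasure Q]
    (ε : ℝ≥0∞) (hε : ε < 1)
    (c : X × Y → ℝ≥0∞) (hc : Measurable c)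
    (T : X → Y) (hT : Measurable T)
    (hmem : (1 - ε) • Measure.map (fun x => (x, T x)) P ∈
      (fun G : Measure (X × Y) => (1 - ε) • G) '' Couplings P Q)
    (hmin : ∀ β ∈ (fun G : Measure (X × Y) => (1 - ε) • G) '' Couplings P Q,
      ∫⁻ z, c z ∂((1 - ε) • Measure.map (fun x => (x, T x)) P) ≤ ∫⁻ z, c z ∂β) :
    Measure.map T ((1 - ε) • P) = (1 - ε) • Q ∧
    (∀ S : X → Y, Measurable S → Measure.map S ((1 - ε) • P) = (1 - ε) • Q →
      ∫⁻ x, c (x, T x) ∂((1 - ε) • P) ≤ ∫⁻ x, c (x, S x) ∂((1 - ε) • P)) ∧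
    (⨅ S : {S : X → Y // Measurable S ∧ Measure.map S ((1 - ε) • P) = (1 - ε) • Q},
        ∫⁻ x, c (x, (S : X → Y) x) ∂((1 - ε) • P) =
      ⨅ α : ((fun G : Measure (X × Y) => (1 - ε) • G) '' Couplings P Q),
        ∫⁻ z, c z ∂(α : Measure (X × Y))) := by
  have h0 : 1 - ε ≠ 0 := (tsub_pos_of_lt hε).ne'
  have ht : 1 - ε ≠ ∞ := ENNReal.sub_ne_top ENNReal.one_ne_top
  have hpush : Measure.map T ((1 - ε) • P) = (1 - ε) • Q := by
    obtain ⟨G, ⟨-, hG⟩, hGT⟩ := hmem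
    have hGT' : G = Measure.map (fun x => (x, T x)) P := measure_smul_cancel h0 ht hGT
    rw [hGT', Measure.map_map measurable_snd (by fun_prop)] at hG
    rw [Measure.map_smul, ← hG]
    rfl
  refine ⟨hpush, fun S hS hSQ => ?_, le_antisymm ?_ ?_⟩
  · rw [← lintegral_graphPlan P _ hc hT, ← lintegral_graphPlan P _ hc hS]
    exact hmin _ (graphPlan_mem h0 ht hS hSQ)
  · refine le_iInf fun α => (iInf_le _ ⟨T, hT, hpush⟩).trans ?_
    rw [← lintegral_graphPlan P _ hc hT]
    exact hmin _ α.2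
  · refine le_iInf fun S => ?_
    rw [← lintegral_graphPlan P _ hc S.2.1]
    exact iInf_le (fun α : ((fun G : Measure (X × Y) => (1 - ε) • G) '' Couplings P Q) =>
      ∫⁻ z, c z ∂(α : Measure (X × Y))) ⟨_, graphPlan_mem h0 ht S.2.1 S.2.2⟩
end
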